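/- Let ε : ℕ → ZMod 2 satisfy the Adem constraints and let s ≥ 1. If ε(r) = 0 for every natural number r that is not congruent to 1 modulo 2^s, and moreover ε(2^s + 1) = 0, then ε(r) = 0 for every natural number r that is not congruent to 1 modulo 2^{s+1}. -/

import Mathlib

/-- `E ε s d` is the sum over all `s`-tuples of naturals summing to `d` of the
products of the values of `ε`, in `ZMod 2`. -/
def E (ε : ℕ → ZMod 2) (s d : ℕ) : ZMod 2 :=
  ∑ f ∈ Finset.Nat.antidiagonalTuple s d, ∏ j, ε (f j)

/-- `ε` satisfies the Adem constraints encoding the Adem relations among the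
Dyer-Lashof operations on `F₂[u]` with `Q^{2r} u = ε r • u^{r+1}`. -/
def AdemConstraints (ε : ℕ → ZMod 2) : Prop :=
  ε 0 = 0 ∧ ε 1 = 1 ∧ ∀ s r : ℕ, r > 2 * s →
    ε s * E ε (s + 1) r =
      ∑ i ∈ (Finset.Icc (s + 1) (r - s - 1)).filter (fun i => r ≤ 2 * i),
        ((Nat.choose (i - s - 1) (2 * i - r) : ZMod 2) * ε i * E ε (i + 1) (r + s - i))

/-!
If `t + r = 2 * m + 1`, the right side of the Adem constraint with indices `t` and `r` ends at
`i = m`: as `ε 0 = 0`, the sum `E ε (i + 1) (2 * m + 1 - i)` vanishes for `i > m`, and it equals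
`1` for `i = m`. So if `ε t = 0` and the earlier terms vanish as well, the constraint reads
`C(m - t - 1, t - 1) * ε m = 0`.

With `q = 2 ^ s`, use this for `t = q + 1` and `m = 1 + j * q` with `j ≥ 3` odd. An earlier term has
`0 < m - i ≤ q / 2`, so `i` is not congruent to `1` modulo `q` and `ε i = 0`. By Lucas' theorem,
`C((j - 1) * q - 1, q) ≡ j - 2` modulo `2`, which is odd, whence `ε m = 0`.
-/

lemma E_eq_zero_of_lt {ε : ℕ → ZMod 2} (h0 : ε 0 = 0) {n d : ℕ} (hdn : d < n) : E ε n d = 0 := by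
  refine Finset.sum_eq_zero fun f hf ↦ ?_
  have hsum : ∑ j, f j < ∑ _j : Fin n, 1 := by
    simpa [Finset.Nat.mem_antidiagonalTuple.mp hf] using hdn
  obtain ⟨j, hj, hlt⟩ := Finset.exists_lt_of_sum_lt hsum
  exact Finset.prod_eq_zero hj (by rw [Nat.lt_one_iff.mp hlt, h0])

lemma E_self {ε : ℕ → ZMod 2} (h0 : ε 0 = 0) (n : ℕ) : E ε n n = ε 1 ^ n := by
  rw [E, Finset.sum_eq_single_of_mem (fun _ ↦ 1) (by simp [Finset.Nat.mem_antidiagonalTuple])]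
  · simp
  · intro f hf hne
    have hsum : ∑ _j : Fin n, 1 = ∑ j, f j := by
      simp [Finset.Nat.mem_antidiagonalTuple.mp hf]
    obtain ⟨j, hj⟩ : ∃ j, f j = 0 := by
      by_contra! hpos
      have hle : ∀ j ∈ Finset.univ, 1 ≤ f j := fun j _ ↦ Nat.one_le_iff_ne_zero.mpr (hpos j)
      have hone := (Finset.sum_eq_sum_iff_of_le hle).mp hsum
      exact hne (funext fun j ↦ (hone j (Finset.mem_univ j)).symm)
    exact Finset.prod_eq_zero (Finset.mem_univ j) (by rw [hj, h0])

lemma AdemConstraints.choose_mul_eq_zero {ε : ℕ → ZMod 2} (hε : AdemConstraints ε) {n m : ℕ}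
    (hnm : 2 * (n + 1) ≤ m) (hn : ε (n + 1) = 0)
    (hgap : ∀ i < m, 2 * m ≤ 2 * i + n → ε i = 0) :
    ((m - n - 2).choose n : ZMod 2) * ε m = 0 := by
  obtain ⟨h0, h1, hadem⟩ := hε
  have hrel := hadem (n + 1) (2 * m - n) (by omega)
  rw [hn, zero_mul, Finset.sum_eq_single_of_mem m] at hrel
  · rw [show m - (n + 1) - 1 = m - n - 2 by omega, show 2 * m - (2 * m - n) = n by omega,
      show 2 * m - n + (n + 1) - m = m + 1 by omega, E_self h0, h1, one_pow, mul_one] at hrel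
    exact hrel.symm
  · simp only [Finset.mem_filter, Finset.mem_Icc]
    omega
  · intro i hi him
    have hmi : 2 * m - n ≤ 2 * i := (Finset.mem_filter.mp hi).2
    rcases him.lt_or_gt with hlt | hgt
    · rw [hgap i hlt (by omega), mul_zero, zero_mul]
    · rw [E_eq_zero_of_lt h0 (by omega), mul_zero]

lemma choose_pow_mul_modEq_choose_div (p : ℕ) [Fact p.Prime] (s n k : ℕ) :
    n.choose (p ^ s * k) ≡ (n / p ^ s).choose k [MOD p] := by
  induction s generalizing n with
  | zero => simp [Nat.ModEq.refl]
  | succ s ih =>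
    calc n.choose (p ^ (s + 1) * k)
        = n.choose (p * (p ^ s * k)) := by rw [pow_succ', mul_assoc]
      _ ≡ (n / p).choose (p ^ s * k) [MOD p] := by
        simpa [NeZero.pos] using Choose.choose_modEq_choose_mod_mul_choose_div_nat
          (n := n) (k := p * (p ^ s * k)) (p := p)
      _ ≡ (n / p / p ^ s).choose k [MOD p] := ih (n / p)
      _ = (n / p ^ (s + 1)).choose k := by rw [Nat.div_div_eq_div_mul, pow_succ']

lemma odd_choose_two_pow (s : ℕ) {n : ℕ} (hn : Even n) (hn0 : n ≠ 0) :
    Odd ((2 ^ s * n - 1).choose (2 ^ s)) := by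
  have hdiv : (2 ^ s * n - 1) / 2 ^ s = n - 1 := by
    simpa using Nat.mul_sub_div 0 (2 ^ s) n (by positivity)
  have hmod := choose_pow_mul_modEq_choose_div 2 s (2 ^ s * n - 1) 1
  rw [mul_one, hdiv, Nat.choose_one_right] at hmod
  rw [Nat.odd_iff, hmod, ← Nat.odd_iff]
  exact Nat.Even.sub_odd (Nat.one_le_iff_ne_zero.mpr hn0) hn odd_one

lemma AdemConstraints.eq_zero_of_odd {ε : ℕ → ZMod 2} (hε : AdemConstraints ε) {s : ℕ}
    (h : ∀ r : ℕ, ¬ r ≡ 1 [MOD 2 ^ s] → ε r = 0) (h' : ε (2 ^ s + 1) = 0)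
    {j : ℕ} (hj : Odd j) : ε (1 + 2 ^ s * j) = 0 := by
  obtain ⟨_ | k, rfl⟩ := hj
  · simpa [add_comm] using h'
  have hpos : 0 < 2 ^ s := by positivity
  set m := 1 + 2 ^ s * (2 * (k + 1) + 1) with hm
  have hm_eq : m = 2 ^ s * (2 * (k + 1)) + (2 ^ s + 1) := by rw [hm]; ring
  have hgap : ∀ i < m, 2 * m ≤ 2 * i + 2 ^ s → ε i = 0 := by
    refine fun i him hmi ↦ h i fun hi ↦ ?_
    have hi_modEq : i ≡ m [MOD 2 ^ s] := by simpa [m, Nat.ModEq] using hi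
    have := Nat.le_of_dvd (by omega) ((Nat.modEq_iff_dvd' him.le).mp hi_modEq)
    omega
  have hchoose : (((m - 2 ^ s - 2).choose (2 ^ s) : ℕ) : ZMod 2) = 1 := by
    rw [show m - 2 ^ s - 2 = 2 ^ s * (2 * (k + 1)) - 1 by omega, ZMod.natCast_eq_one_iff_odd]
    exact odd_choose_two_pow s (even_two_mul _) (by omega)
  have hle : 2 * (2 ^ s + 1) ≤ m := by
    rw [hm_eq]
    nlinarith
  simpa [hchoose] using hε.choose_mul_eq_zero hle h' hgap

theorem stmt_4_general {ε : ℕ → ZMod 2} (hε : AdemConstraints ε) (s : ℕ)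
    (h : ∀ r : ℕ, ¬ r ≡ 1 [MOD 2 ^ s] → ε r = 0) (h' : ε (2 ^ s + 1) = 0) :
    ∀ r : ℕ, ¬ r ≡ 1 [MOD 2 ^ (s + 1)] → ε r = 0 := by
  intro r hr
  by_cases hrs : r ≡ 1 [MOD 2 ^ s]
  · rcases r.eq_zero_or_pos with rfl | hpos
    · exact hε.1
    obtain ⟨j, rfl⟩ := (Nat.modEq_iff_exists_eq_add hpos).mp hrs.symm
    refine hε.eq_zero_of_odd h h' (Nat.not_even_iff_odd.mp ?_)
    rintro ⟨k, rfl⟩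
    exact hr ((Nat.modEq_iff_exists_eq_add hpos).mpr ⟨k, by ring⟩).symm
  · exact h r hrs

theorem stmt_4 (ε : ℕ → ZMod 2) (hε : AdemConstraints ε) (s : ℕ) (hs : 1 ≤ s)
    (h : ∀ r : ℕ, r % 2 ^ s ≠ 1 → ε r = 0) (h' : ε (2 ^ s + 1) = 0) :
    ∀ r : ℕ, r % 2 ^ (s + 1) ≠ 1 → ε r = 0 := by
  have one_mod {t : ℕ} (ht : t ≠ 0) : 1 % 2 ^ t = 1 := Nat.mod_eq_of_lt (Nat.one_lt_two_pow ht)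
  simpa only [Nat.ModEq, one_mod s.succ_ne_zero] using
    stmt_4_general hε s (by simpa only [Nat.ModEq, one_mod (Nat.ne_of_gt hs)] using h) h'
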